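/- arXiv:2504.01631 — 3 statements merged into one kernel-verified Lean document; each statement's English description precedes it below -/
import Mathlib

section
/- Let h : ℝ^n → [0,∞) be a proper log-concave function in John s-position. Let ν be a finite, positive, non-zero Borel measure on B^n whose support is contained in Λ = {x ∈ B^n : h(x)^{1/s} = √(1−|x|₂²)}, and let F ∈ 𝒲 be of class C¹. If the restriction of Ī_ν to the subspace {(M⊕β,w) : M symmetric n×n, β ∈ ℝ, w ∈ ℝ^n, s·β + tr M = 0} is coercive, then for any global minimum (M₀⊕β₀,w₀) of this restriction, the measure μ on B^n defined by dμ(x) = h(x)^{−1/s} F′(⟨x,M₀x+w₀⟩/h(x)^{2/s} + β₀) dν(x) is non-negative, non-zero, centered (∫_{B^n} x dμ(x) = 0), and s-isotropic: there exists λ > 0 such that ∫_{B^n} x xᵀ dμ(x) = λ·Id_n and ∫_{B^n} (1−|x|₂²) dμ(x) = λ·s. -/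
/-!
The conclusion is the Euler–Lagrange equation of `Ī_ν` at its minimum on the subspace
`s β + tr M = 0`: the derivative in the direction `(M ⊕ β, w)` is
`∫ h^{1/s} F'(a) (⟨x, Mx + w⟩ / h^{2/s} + β) dν = ∫ (⟨x, Mx + w⟩ + β (1 - |x|²)) dμ`,
because `h^{2/s} = 1 - |x|²` on the contact set. Its vanishing for `w = eᵢ`, for `M = Eᵢⱼ + Eⱼᵢ`
with `i ≠ j`, and for `M = Eᵢᵢ, β = -1/s` gives the centering and isotropy identities with
`λ s = ∫ (1 - |x|²) dμ`.

As `h` may vanish on the unit sphere, the integrands can be unbounded. Coercivity makes them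
integrable on the whole subspace (`integrable_of_coercive`), and convexity of `F` then dominates the
derivatives (`first_variation`). To split the last identity, `1 - |x|²` itself must be
`μ`-integrable, although the direction `(0 ⊕ 1, 0)` is not in the subspace (`integrable_weight`).
Finally `λ > 0`, since otherwise `Ī_ν` would be constant along a ray (`weight_ne_zero`).
-/


open MeasureTheory Real Set Filter Topology

noncomputable section

/-- squared Euclidean norm on ℝ^n -/
def en2 {n : ℕ} (x : Fin n → ℝ) : ℝ := ∑ i, x i ^ 2

/-- Euclidean inner product on ℝ^n -/
def dotp {n : ℕ} (x y : Fin n → ℝ) : ℝ := ∑ i, x i * y i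

/-- the closed Euclidean unit ball B^n -/
def unitBall (n : ℕ) : Set (Fin n → ℝ) := {x | en2 x ≤ 1}

/-- log-concavity -/
def LogConcave {n : ℕ} (h : (Fin n → ℝ) → ℝ) : Prop :=
  ∀ x y : Fin n → ℝ, ∀ l : ℝ, 0 < l → l < 1 →
    h x ^ l * h y ^ (1 - l) ≤ h (l • x + (1 - l) • y)

/-- proper log-concave: upper semicontinuous, log-concave, finite positive integral -/
def ProperLogConcave {n : ℕ} (h : (Fin n → ℝ) → ℝ) : Prop :=
  (∀ x, 0 ≤ h x) ∧ UpperSemicontinuous h ∧ LogConcave h ∧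
    MeasureTheory.Integrable h ∧ 0 < ∫ x, h x

/-- the s-lifting of h -/
def sLift {n : ℕ} (s : ℝ) (h : (Fin n → ℝ) → ℝ) : Set ((Fin n → ℝ) × ℝ) :=
  {p | |p.2| ≤ h p.1 ^ (1 / s)}

/-- the n-symmetric ellipsoid (A⊕α)B^{n+1} + (a,0), as a subset of ℝ^n × ℝ -/
def ellImage {n : ℕ} (A : Matrix (Fin n) (Fin n) ℝ) (α : ℝ) (a : Fin n → ℝ) :
    Set ((Fin n → ℝ) × ℝ) :=
  {p | ∃ x : Fin n → ℝ, ∃ t : ℝ, en2 x + t ^ 2 ≤ 1 ∧ p = (A.mulVec x + a, α * t)}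

/-- h is in John s-position -/
def JohnSPos {n : ℕ} (s : ℝ) (h : (Fin n → ℝ) → ℝ) : Prop :=
  (∀ x : Fin n → ℝ, x ∈ unitBall n → Real.sqrt (1 - en2 x) ≤ h x ^ (1 / s)) ∧
  (∀ (A : Matrix (Fin n) (Fin n) ℝ) (α : ℝ) (a : Fin n → ℝ),
    A.PosDef → 0 < α → ellImage A α a ⊆ sLift s h → α ^ s * A.det ≤ 1)

/-- the contact set Λ = {x ∈ Bⁿ : h(x)^{1/s} = √(1-|x|²)} -/
def contactSet {n : ℕ} (s : ℝ) (h : (Fin n → ℝ) → ℝ) : Set (Fin n → ℝ) :=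
  {x | en2 x ≤ 1 ∧ h x ^ (1 / s) = Real.sqrt (1 - en2 x)}

/-- the class 𝒲 of weight functions -/
def ClassW (F : ℝ → ℝ) : Prop :=
  (∀ x, 0 ≤ F x) ∧ Monotone F ∧ ConvexOn ℝ Set.univ F ∧
    StrictConvexOn ℝ (Set.Ici (0 : ℝ)) F ∧ 0 < deriv F 0

/-- the norm ‖(M⊕β,w)‖ = √(‖M⊕β‖_F² + |w|₂²) -/
def tripNorm {n : ℕ} (M : Matrix (Fin n) (Fin n) ℝ) (β : ℝ) (w : Fin n → ℝ) : ℝ :=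
  Real.sqrt ((∑ i, ∑ j, M i j ^ 2) + β ^ 2 + ∑ i, w i ^ 2)

/-- properties (f1)-(f4) -/
def Prop_f (f : ℝ → ℝ) : Prop :=
  (∀ x, 0 ≤ f x) ∧ LocallyLipschitz f ∧ ConvexOn ℝ Set.univ f ∧
    (∀ x ≤ (-1 : ℝ), f x = 0) ∧ StrictMonoOn f (Set.Ici (-1 : ℝ))

/-- properties (g1)-(g5) -/
def Prop_g (g : ℝ → ℝ) : Prop :=
  (∀ x, 0 ≤ g x) ∧ LocallyLipschitz g ∧ Antitone g ∧
    (∀ x ≤ (-1 : ℝ), g x = 1) ∧ (∀ x : ℝ, -1 < x → x < 1 → 0 < g x) ∧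
    (∀ x : ℝ, (1 : ℝ) ≤ x → g x = 0)

/-- the functional L̄_r -/
def Lbar {n : ℕ} (s : ℝ) (h : (Fin n → ℝ) → ℝ) (f g : ℝ → ℝ) (r : ℝ)
    (A : Matrix (Fin n) (Fin n) ℝ) (α : ℝ) (v : Fin n → ℝ) : ℝ :=
  (1 / (1 - r)) *
    ∫ x : Fin n → ℝ, ∫ y in Set.Ioi (0 : ℝ),
      (if h (A.mulVec x + v) = 0 ∨ h x = 0 then 0 else
        f ((α * y / h (A.mulVec x + v) ^ (1 / s) - 1) / (1 - r)) *
        g (((en2 x + y ^ 2 - 1) / (2 * h x ^ (2 / s)) + 1 - 1) / (1 - r)))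

/-- the functional Ī_ν -/
def IbarNu {n : ℕ} (s : ℝ) (h : (Fin n → ℝ) → ℝ)
    (ν : MeasureTheory.Measure (Fin n → ℝ)) (F : ℝ → ℝ)
    (M : Matrix (Fin n) (Fin n) ℝ) (β : ℝ) (w : Fin n → ℝ) : ℝ :=
  ∫ x in unitBall n,
    (if h x = 0 then 0 else
      h x ^ (1 / s) * F (dotp x (M.mulVec x + w) / h x ^ (2 / s) + β)) ∂ν

/-- the functional Ī_1 -/
def Ibar1 {n : ℕ} (s : ℝ) (h : (Fin n → ℝ) → ℝ) (F : ℝ → ℝ)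
    (M : Matrix (Fin n) (Fin n) ℝ) (β : ℝ) (w : Fin n → ℝ) : ℝ :=
  ∫ x in contactSet s h,
    h x ^ (1 / s) * F (dotp x (M.mulVec x + w) / h x ^ (2 / s) + β)

/-- the functional Ī_r -/
def IbarR {n : ℕ} (s : ℝ) (h : (Fin n → ℝ) → ℝ) (f g : ℝ → ℝ) (r : ℝ)
    (M : Matrix (Fin n) (Fin n) ℝ) (β : ℝ) (w : Fin n → ℝ) : ℝ :=
  (1 + (1 - r) * β) ^ (s - 1) / (1 - r) *
    ∫ x : Fin n → ℝ, ∫ y in Set.Ioi (0 : ℝ),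
      (if h x = 0 ∨ h ((1 + (1 - r) • M)⁻¹.mulVec (x - (1 - r) • w)) = 0 then 0 else
        f ((y / h x ^ (1 / s) - 1) / (1 - r)) *
        g (((en2 ((1 + (1 - r) • M)⁻¹.mulVec (x - (1 - r) • w)) +
              ((1 + (1 - r) * β)⁻¹ * y) ^ 2 - 1) /
            (2 * h ((1 + (1 - r) • M)⁻¹.mulVec (x - (1 - r) • w)) ^ (2 / s)) + 1 - 1) /
          (1 - r)))

/-- the convolution F = f ∗ ḡ, F(x) = ∫ f(t) g(t-x) dt -/
def Fconv (f g : ℝ → ℝ) : ℝ → ℝ := fun x => ∫ t : ℝ, f t * g (t - x)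

/-- density of the limiting measure with respect to ν -/
def minDens {n : ℕ} (s : ℝ) (h : (Fin n → ℝ) → ℝ) (F : ℝ → ℝ)
    (M₀ : Matrix (Fin n) (Fin n) ℝ) (β₀ : ℝ) (w₀ : Fin n → ℝ) (x : Fin n → ℝ) : ℝ :=
  if h x = 0 then 0 else
    h x ^ (-(1 / s)) * deriv F (dotp x (M₀.mulVec x + w₀) / h x ^ (2 / s) + β₀)

/-! ### Convex integral functionals -/

/-- `F` lies above its tangent lines. -/
lemma tangent_le {F : ℝ → ℝ} (hc : ConvexOn ℝ Set.univ F) (hd : Differentiable ℝ F) (a b : ℝ) :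
    F a + deriv F a * b ≤ F (a + b) := by
  rcases lt_trichotomy b 0 with hb | hb | hb
  · have := hc.slope_le_deriv (mem_univ (a + b)) (mem_univ a) (by linarith) (hd a)
    rw [slope_def_field, show a - (a + b) = -b by ring, div_le_iff₀ (by linarith)] at this
    linarith
  · simp [hb]
  · have := hc.deriv_le_slope (mem_univ a) (mem_univ (a + b)) (by linarith) (hd a)
    rw [slope_def_field, show (a + b) - a = b by ring, le_div_iff₀ hb] at this
    linarith

/-- Vanishing first variation of a convex integral functional at a minimum of its restriction to
a line. Convexity dominates the `t`-derivative `F'(a + t b) b`, `|t| < 1`, by increments of `F`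
along the line, so integrability along the line is all that differentiation under the integral
needs. -/
lemma first_variation {X : Type*} [MeasurableSpace X] {ρ : Measure X} {F : ℝ → ℝ}
    (hc : ConvexOn ℝ Set.univ F) (hF1 : ContDiff ℝ 1 F) {p a b : X → ℝ}
    (hp0 : ∀ x, 0 ≤ p x) (hp : Measurable p) (ha : Measurable a) (hb : Measurable b)
    (hint : ∀ t : ℝ, Integrable (fun x => p x * F (a x + t * b x)) ρ)
    (hmin : ∀ t : ℝ, ∫ x, p x * F (a x) ∂ρ ≤ ∫ x, p x * F (a x + t * b x) ∂ρ) :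
    Integrable (fun x => p x * (deriv F (a x) * b x)) ρ ∧
      ∫ x, p x * (deriv F (a x) * b x) ∂ρ = 0 := by
  have hd : Differentiable ℝ F := hF1.differentiable (by norm_num)
  have hFm : Measurable F := hF1.continuous.measurable
  have hF'm : Measurable (deriv F) := measurable_deriv F
  have hbd : Integrable (fun x =>
      |p x * F (a x + 2 * b x) - p x * F (a x + 1 * b x)| +
      |p x * F (a x + (-2) * b x) - p x * F (a x + (-1) * b x)|) ρ :=
    ((hint 2).sub (hint 1)).abs.add ((hint (-2)).sub (hint (-1))).abs
  have hmono : Monotone (deriv F) := by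
    have := hc.monotoneOn_deriv (fun x _ => hd x)
    exact monotoneOn_univ.1 this
  have key := hasDerivAt_integral_of_dominated_loc_of_deriv_le (μ := ρ) (𝕜 := ℝ)
    (F := fun t x => p x * F (a x + t * b x)) (x₀ := 0) (s := Metric.ball 0 1)
    (F' := fun t x => p x * (deriv F (a x + t * b x) * b x))
    (Metric.ball_mem_nhds 0 one_pos)
    (Eventually.of_forall fun t => (hint t).aestronglyMeasurable)
    (hint 0) (by
      apply Measurable.aestronglyMeasurable
      fun_prop) (bound := fun x =>
      |p x * F (a x + 2 * b x) - p x * F (a x + 1 * b x)| +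
      |p x * F (a x + (-2) * b x) - p x * F (a x + (-1) * b x)|) ?_ hbd ?_
  · obtain ⟨h1, h2⟩ := key
    have hz := IsLocalMin.hasDerivAt_eq_zero
      (Eventually.of_forall fun t => by simpa using hmin t) h2
    simp only [zero_mul, add_zero] at h1 hz
    exact ⟨h1, hz⟩
  · refine Eventually.of_forall fun x t ht => ?_
    rw [Metric.mem_ball, dist_zero_right, Real.norm_eq_abs, abs_lt] at ht
    -- `t ↦ F'(a + t b) b` is non-decreasing whatever the sign of `b`
    have hm : ∀ t u : ℝ, t ≤ u →
        deriv F (a x + t * b x) * b x ≤ deriv F (a x + u * b x) * b x := by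
      intro t u htu
      rcases le_total 0 (b x) with h0 | h0
      · exact mul_le_mul_of_nonneg_right (hmono (by nlinarith)) h0
      · exact mul_le_mul_of_nonpos_right (hmono (by nlinarith)) h0
    have u1 := tangent_le hc hd (a x + 1 * b x) (b x)
    have u2 := tangent_le hc hd (a x + (-1) * b x) (-b x)
    rw [show a x + 1 * b x + b x = a x + 2 * b x by ring] at u1
    rw [show a x + (-1) * b x + -b x = a x + (-2) * b x by ring] at u2
    have m1 := hm t 1 ht.2.le
    have m2 := hm (-1) t ht.1.le
    have up : p x * (deriv F (a x + t * b x) * b x) ≤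
        p x * F (a x + 2 * b x) - p x * F (a x + 1 * b x) := by
      rw [← mul_sub]; exact mul_le_mul_of_nonneg_left (by linarith) (hp0 x)
    have lo : -(p x * (deriv F (a x + t * b x) * b x)) ≤
        p x * F (a x + (-2) * b x) - p x * F (a x + (-1) * b x) := by
      rw [← mul_sub, ← mul_neg]; exact mul_le_mul_of_nonneg_left (by linarith) (hp0 x)
    rw [Real.norm_eq_abs, abs_le]
    constructor
    · linarith [le_abs_self (p x * F (a x + (-2) * b x) - p x * F (a x + (-1) * b x)),
        abs_nonneg (p x * F (a x + 2 * b x) - p x * F (a x + 1 * b x))]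
    · linarith [le_abs_self (p x * F (a x + 2 * b x) - p x * F (a x + 1 * b x)),
        abs_nonneg (p x * F (a x + (-2) * b x) - p x * F (a x + (-1) * b x))]
  · refine Eventually.of_forall fun x t _ => ?_
    have h1 : HasDerivAt (fun t => a x + t * b x) (b x) t := by
      simpa using ((hasDerivAt_id t).mul_const (b x)).const_add (a x)
    exact ((hd _).hasDerivAt.comp t h1).const_mul (p x)

/-! ### The argument of `F` and the norm of triples -/

/-- The argument `⟨x, Mx + w⟩ / h(x)^{2/s} + β` of `F` in `IbarNu`; it is linear in `(M, β, w)`. -/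
def argF {n : ℕ} (s : ℝ) (h : (Fin n → ℝ) → ℝ) (M : Matrix (Fin n) (Fin n) ℝ) (β : ℝ)
    (w x : Fin n → ℝ) : ℝ := dotp x (M.mulVec x + w) / h x ^ (2 / s) + β

lemma dotp_add_smul {n : ℕ} (M N : Matrix (Fin n) (Fin n) ℝ) (w u x : Fin n → ℝ) (t : ℝ) :
    dotp x ((M + t • N).mulVec x + (w + t • u)) =
      dotp x (M.mulVec x + w) + t * dotp x (N.mulVec x + u) := by
  simp only [dotp, Finset.mul_sum, ← Finset.sum_add_distrib]
  refine Finset.sum_congr rfl fun i _ => ?_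
  simp only [Matrix.add_mulVec, Matrix.smul_mulVec, Pi.add_apply, Pi.smul_apply, smul_eq_mul]
  ring

lemma argF_add_smul {n : ℕ} (s : ℝ) (h : (Fin n → ℝ) → ℝ) (M N : Matrix (Fin n) (Fin n) ℝ)
    (β γ : ℝ) (w u x : Fin n → ℝ) (t : ℝ) :
    argF s h (M + t • N) (β + t * γ) (w + t • u) x =
      argF s h M β w x + t * argF s h N γ u x := by
  rw [argF, argF, argF, dotp_add_smul]; ring

lemma measurable_dotp {n : ℕ} (M : Matrix (Fin n) (Fin n) ℝ) (w : Fin n → ℝ) :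
    Measurable fun x : Fin n → ℝ => dotp x (M.mulVec x + w) := by
  unfold dotp Matrix.mulVec dotProduct
  simp only [Pi.add_apply]
  fun_prop

lemma measurable_argF {n : ℕ} {s : ℝ} {h : (Fin n → ℝ) → ℝ} (hm : Measurable h)
    (M : Matrix (Fin n) (Fin n) ℝ) (β : ℝ) (w : Fin n → ℝ) :
    Measurable (argF s h M β w) :=
  ((measurable_dotp M w).div (hm.pow_const _)).add_const _

/-- The case distinction in `IbarNu` is redundant, because `0 ^ (1/s) = 0`. -/
lemma IbarNu_eq {n : ℕ} {s : ℝ} (hs : 0 < s) (h : (Fin n → ℝ) → ℝ)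
    (ν : Measure (Fin n → ℝ)) (F : ℝ → ℝ) (M : Matrix (Fin n) (Fin n) ℝ) (β : ℝ)
    (w : Fin n → ℝ) :
    IbarNu s h ν F M β w =
      ∫ x, h x ^ (1 / s) * F (argF s h M β w x) ∂(ν.restrict (unitBall n)) := by
  unfold IbarNu argF
  congr 1
  funext x
  split_ifs with h0
  · rw [h0, Real.zero_rpow (by positivity), zero_mul]
  · rfl

lemma en2_nonneg {n : ℕ} (x : Fin n → ℝ) : 0 ≤ en2 x :=
  Finset.sum_nonneg fun i _ => sq_nonneg (x i)

lemma abs_coord_le {n : ℕ} {x : Fin n → ℝ} (hx : en2 x ≤ 1) (i : Fin n) : |x i| ≤ 1 := by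
  have : x i ^ 2 ≤ en2 x := Finset.single_le_sum (f := fun i => x i ^ 2)
    (fun i _ => sq_nonneg _) (Finset.mem_univ i)
  exact (sq_le_one_iff_abs_le_one _).1 (this.trans hx)

lemma dotp_le {n : ℕ} (M : Matrix (Fin n) (Fin n) ℝ) (w : Fin n → ℝ) :
    ∃ B : ℝ, 0 ≤ B ∧ ∀ x : Fin n → ℝ, en2 x ≤ 1 → dotp x (M.mulVec x + w) ≤ B := by
  refine ⟨∑ i, ((∑ j, |M i j|) + |w i|), Finset.sum_nonneg fun i _ => by positivity,
    fun x hx => Finset.sum_le_sum fun i _ => ?_⟩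
  have h1 := abs_coord_le hx
  have h2 : |(M.mulVec x + w) i| ≤ (∑ j, |M i j|) + |w i| := by
    rw [Pi.add_apply]
    refine (abs_add_le _ _).trans (add_le_add ?_ le_rfl)
    refine (Finset.abs_sum_le_sum_abs (fun j => M i j * x j) Finset.univ).trans
      (Finset.sum_le_sum fun j _ => ?_)
    rw [abs_mul]
    exact mul_le_of_le_one_right (abs_nonneg _) (h1 j)
  refine (le_abs_self _).trans ?_
  rw [abs_mul]
  exact (mul_le_of_le_one_left (abs_nonneg _) (h1 i)).trans h2

lemma abs_le_tripNorm {n : ℕ} (M : Matrix (Fin n) (Fin n) ℝ) (β : ℝ) (w : Fin n → ℝ)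
    (i : Fin n) : |w i| ≤ tripNorm M β w := by
  apply Real.abs_le_sqrt
  have h1 : w i ^ 2 ≤ ∑ i, w i ^ 2 := Finset.single_le_sum (f := fun i => w i ^ 2)
    (fun i _ => sq_nonneg _) (Finset.mem_univ i)
  have h2 : 0 ≤ ∑ i, ∑ j, M i j ^ 2 :=
    Finset.sum_nonneg fun i _ => Finset.sum_nonneg fun j _ => sq_nonneg _
  nlinarith [sq_nonneg β]

lemma tripNorm_smul {n : ℕ} (M : Matrix (Fin n) (Fin n) ℝ) (β : ℝ) (w : Fin n → ℝ) {t : ℝ}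
    (ht : 0 ≤ t) : tripNorm (t • M) (t * β) (t • w) = t * tripNorm M β w := by
  have h1 : (∑ i, ∑ j, (t • M) i j ^ 2) + (t * β) ^ 2 + ∑ i, (t • w) i ^ 2 =
      t ^ 2 * ((∑ i, ∑ j, M i j ^ 2) + β ^ 2 + ∑ i, w i ^ 2) := by
    simp only [Matrix.smul_apply, Pi.smul_apply, smul_eq_mul, mul_pow, mul_add, Finset.mul_sum]
  rw [tripNorm, h1, Real.sqrt_mul (sq_nonneg t), Real.sqrt_sq ht, tripNorm]

lemma eq_zero_of_tripNorm {n : ℕ} {M : Matrix (Fin n) (Fin n) ℝ} {β : ℝ} {w : Fin n → ℝ}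
    (h : tripNorm M β w = 0) : M = 0 ∧ β = 0 ∧ w = 0 := by
  have h2 : 0 ≤ ∑ i, ∑ j, M i j ^ 2 :=
    Finset.sum_nonneg fun i _ => Finset.sum_nonneg fun j _ => sq_nonneg _
  have h3 : 0 ≤ ∑ i, w i ^ 2 := Finset.sum_nonneg fun i _ => sq_nonneg _
  have h4 := sq_nonneg β
  rw [tripNorm, Real.sqrt_eq_zero (by positivity)] at h
  have hM : ∑ i, ∑ j, M i j ^ 2 = 0 := by linarith
  have hw : ∑ i, w i ^ 2 = 0 := by linarith
  refine ⟨?_, by nlinarith, ?_⟩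
  · ext i j
    have h5 := (Finset.sum_eq_zero_iff_of_nonneg
      (fun i _ => Finset.sum_nonneg fun j _ => sq_nonneg (M i j))).1 hM i (Finset.mem_univ i)
    have h6 := (Finset.sum_eq_zero_iff_of_nonneg
      (fun j _ => sq_nonneg (M i j))).1 h5 j (Finset.mem_univ j)
    simpa using h6
  · ext i
    have h5 := (Finset.sum_eq_zero_iff_of_nonneg
      (fun j _ => sq_nonneg (w j))).1 hw i (Finset.mem_univ i)
    simpa using h5

lemma dotp_single {n : ℕ} (i j : Fin n) (x : Fin n → ℝ) :
    dotp x ((Matrix.single i j (1 : ℝ)).mulVec x) = x i * x j := by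
  simp [dotp, Matrix.single_mulVec, Function.update_apply]

lemma dotp_add {n : ℕ} (x y z : Fin n → ℝ) : dotp x (y + z) = dotp x y + dotp x z := by
  simp [dotp, mul_add, Finset.sum_add_distrib]

lemma dotp_one {n : ℕ} (x : Fin n → ℝ) :
    dotp x ((1 : Matrix (Fin n) (Fin n) ℝ).mulVec x + 0) = en2 x := by
  simp [dotp, en2, sq]

lemma dotp_single_vec {n : ℕ} (i : Fin n) (x : Fin n → ℝ) :
    dotp x ((0 : Matrix (Fin n) (Fin n) ℝ).mulVec x + Pi.single i 1) = x i := by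
  simp [dotp, Pi.single_apply]

/-! ### Consequences of coercivity and integrability of the weight -/

/-- Coercivity forces `Ī_ν` to be an honest integral everywhere on the subspace: far out the
Bochner integral is at least `1`, hence not the junk value `0`, and every point is the midpoint of
two points far out in the `w`-direction. -/
lemma integrable_of_coercive {n : ℕ} (hn : 1 ≤ n) {s : ℝ} (hs : 0 < s)
    {h : (Fin n → ℝ) → ℝ} (h0 : ∀ x, 0 ≤ h x) (hm : Measurable h)
    {ν : Measure (Fin n → ℝ)} {F : ℝ → ℝ} (hF0 : ∀ x, 0 ≤ F x) (hc : ConvexOn ℝ Set.univ F)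
    (hFm : Measurable F)
    (hcoer : ∀ C : ℝ, ∃ R : ℝ, ∀ (M : Matrix (Fin n) (Fin n) ℝ) (β : ℝ) (w : Fin n → ℝ),
      M.IsSymm → s * β + Matrix.trace M = 0 → R ≤ tripNorm M β w →
      C ≤ IbarNu s h ν F M β w)
    {M : Matrix (Fin n) (Fin n) ℝ} {β : ℝ} {w : Fin n → ℝ}
    (hM : M.IsSymm) (htr : s * β + Matrix.trace M = 0) :
    Integrable (fun x => h x ^ (1 / s) * F (argF s h M β w x)) (ν.restrict (unitBall n)) := by
  obtain ⟨R, hR⟩ := hcoer 1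
  set i : Fin n := ⟨0, hn⟩
  set K : ℝ := |w i| + |R|
  have hKR : R ≤ K - |w i| := by simp only [K]; linarith [le_abs_self R]
  have hK0 : 0 ≤ K := by positivity
  have far : ∀ v : Fin n → ℝ, R ≤ |v i| →
      Integrable (fun x => h x ^ (1 / s) * F (argF s h M β v x)) (ν.restrict (unitBall n)) := by
    intro v hv
    have h1 := hR M β v hM htr (hv.trans (abs_le_tripNorm M β v i))
    rw [IbarNu_eq hs] at h1
    by_contra hni
    rw [integral_undef hni] at h1
    linarith
  have i1 := far (w + K • Pi.single i 1) (by
    simp only [Pi.add_apply, Pi.smul_apply, Pi.single_eq_same, smul_eq_mul, mul_one]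
    refine le_trans ?_ (le_abs_self _)
    linarith [neg_abs_le (w i)])
  have i2 := far (w + (-K) • Pi.single i 1) (by
    simp only [Pi.add_apply, Pi.smul_apply, Pi.single_eq_same, smul_eq_mul, mul_one]
    refine le_trans ?_ (neg_le_abs _)
    linarith [le_abs_self (w i)])
  refine ((i1.add i2).const_mul (1 / 2)).mono' ?_ (Eventually.of_forall fun x => ?_)
  · exact ((hm.pow_const _).mul (hFm.comp (measurable_argF hm M β w))).aestronglyMeasurable
  · have hp := Real.rpow_nonneg (h0 x) (1 / s)
    rw [Real.norm_of_nonneg (mul_nonneg hp (hF0 _))]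
    have e1 := argF_add_smul s h M 0 β 0 w (Pi.single i 1) x K
    have e2 := argF_add_smul s h M 0 β 0 w (Pi.single i 1) x (-K)
    simp only [smul_zero, add_zero, mul_zero] at e1 e2
    simp only [Pi.add_apply, e1, e2]
    set a := argF s h M β w x
    set b := argF s h 0 0 (Pi.single i 1) x
    have := hc.2 (mem_univ (a + K * b)) (mem_univ (a + -K * b))
      (by norm_num : (0 : ℝ) ≤ 1 / 2) (by norm_num : (0 : ℝ) ≤ 1 / 2) (by norm_num)
    simp only [smul_eq_mul] at this
    rw [show 1 / 2 * (a + K * b) + 1 / 2 * (a + -K * b) = a by ring] at this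
    calc h x ^ (1 / s) * F a
        ≤ h x ^ (1 / s) * (1 / 2 * F (a + K * b) + 1 / 2 * F (a + -K * b)) :=
          mul_le_mul_of_nonneg_left this hp
      _ = _ := by ring

/-- The weight `h^{1/s} G(a)`, with `G` in the role of `F'`, is integrable. With `q = |x|²/h^{2/s}`, it is
dominated by its product with `q - n/s`, the direction `(Id ⊕ -n/s, 0)`, where `q ≥ n/s + 1`;
elsewhere `h^{-2/s} = q + 1 < n/s + 2` on the contact set, so `a` is bounded above. -/
lemma integrable_weight {n : ℕ} {s : ℝ}
    {h : (Fin n → ℝ) → ℝ} (h0 : ∀ x, 0 ≤ h x) (hm : Measurable h)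
    {ρ : Measure (Fin n → ℝ)} [IsFiniteMeasure ρ]
    (hae : ∀ᵐ x ∂ρ, en2 x ≤ 1 ∧ (h x ^ (1 / s)) ^ 2 = 1 - en2 x)
    {G : ℝ → ℝ} (hG0 : ∀ x, 0 ≤ G x) (hGm : Monotone G)
    {M : Matrix (Fin n) (Fin n) ℝ} {β : ℝ} {w : Fin n → ℝ}
    (hint : Integrable (fun x => h x ^ (1 / s) *
      (G (argF s h M β w x) * argF s h 1 (-(n / s)) 0 x)) ρ) :
    Integrable (fun x => h x ^ (1 / s) * G (argF s h M β w x)) ρ := by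
  obtain ⟨B, hB0, hB⟩ := dotp_le M w
  refine (hint.abs.add (integrable_const (G (B * (n / s + 2) + β)))).mono' ?_ ?_
  · exact ((hm.pow_const _).mul
      (hGm.measurable.comp (measurable_argF hm M β w))).aestronglyMeasurable
  filter_upwards [hae] with x ⟨hx1, hx2⟩
  have hp : 0 ≤ h x ^ (1 / s) := Real.rpow_nonneg (h0 x) _
  have hp2 : h x ^ (2 / s) = (h x ^ (1 / s)) ^ 2 := by
    rw [← Real.rpow_natCast, ← Real.rpow_mul (h0 x)]
    congr 1
    push_cast
    ring
  have hp1 : h x ^ (1 / s) ≤ 1 := by nlinarith [en2_nonneg x]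
  rw [Real.norm_of_nonneg (mul_nonneg hp (hG0 _))]
  simp only [Pi.add_apply]
  have hCn := hG0 (B * (n / s + 2) + β)
  rcases hp.eq_or_lt with hpz | hpp
  · rw [← hpz]; simpa using hCn
  by_cases hq : 1 ≤ argF s h 1 (-(n / s)) 0 x
  · refine le_trans ?_ (le_add_of_nonneg_right hCn)
    refine le_trans ?_ (le_abs_self _)
    exact mul_le_mul_of_nonneg_left (le_mul_of_one_le_right (hG0 _) hq) hp
  · refine le_trans ?_ (le_add_of_nonneg_left (abs_nonneg _))
    refine (mul_le_of_le_one_left (hG0 _) hp1).trans (hGm ?_)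
    rw [argF, dotp_one, hp2] at hq
    rw [argF, hp2]
    have hpp2 : 0 < (h x ^ (1 / s)) ^ 2 := by positivity
    have e : 1 / (h x ^ (1 / s)) ^ 2 = en2 x / (h x ^ (1 / s)) ^ 2 + 1 := by
      rw [hx2] at hpp2 ⊢
      field_simp
      ring
    have h3 : dotp x (M.mulVec x + w) / (h x ^ (1 / s)) ^ 2 ≤ B * (1 / (h x ^ (1 / s)) ^ 2) := by
      rw [mul_one_div]
      gcongr
      exact hB x hx1
    rw [e] at h3
    have h4 : en2 x / (h x ^ (1 / s)) ^ 2 + 1 ≤ n / s + 2 := by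
      push Not at hq
      linarith
    linarith [mul_le_mul_of_nonneg_left h4 hB0]

/-- The weight `h^{1/s} F'(a)` does not vanish almost everywhere: otherwise, where `h ≠ 0`, `a < 0`
and `F` is constant to the left of `a`, so `Ī_ν` is constant along the ray `t (M ⊕ β, w)`, `t ≥ 1`,
against coercivity. At the origin there is no such ray, but `F'(0) > 0` then forces `h = 0` almost
everywhere and `Ī_ν = 0`. -/
lemma weight_ne_zero {n : ℕ} (hn : 1 ≤ n) {s : ℝ} (hs : 0 < s)
    {h : (Fin n → ℝ) → ℝ} {ν : Measure (Fin n → ℝ)} {F : ℝ → ℝ}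
    (hmono : Monotone F) (hc : ConvexOn ℝ Set.univ F) (hd : Differentiable ℝ F)
    (hF'0 : 0 < deriv F 0)
    (hcoer : ∀ C : ℝ, ∃ R : ℝ, ∀ (M : Matrix (Fin n) (Fin n) ℝ) (β : ℝ) (w : Fin n → ℝ),
      M.IsSymm → s * β + Matrix.trace M = 0 → R ≤ tripNorm M β w →
      C ≤ IbarNu s h ν F M β w)
    {M : Matrix (Fin n) (Fin n) ℝ} {β : ℝ} {w : Fin n → ℝ}
    (hM : M.IsSymm) (htr : s * β + Matrix.trace M = 0) :
    ¬ ∀ᵐ x ∂(ν.restrict (unitBall n)), h x ^ (1 / s) * deriv F (argF s h M β w x) = 0 := by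
  intro hz
  have hmd : Monotone (deriv F) :=
    monotoneOn_univ.1 (hc.monotoneOn_deriv (fun x _ => hd x))
  by_cases hN : tripNorm M β w = 0
  · obtain ⟨rfl, rfl, rfl⟩ := eq_zero_of_tripNorm hN
    obtain ⟨R, hR⟩ := hcoer 1
    have h1 := hR 0 0 (|R| • Pi.single ⟨0, hn⟩ 1) (by simp [Matrix.IsSymm]) (by simp) (by
      refine le_trans ?_ (abs_le_tripNorm _ _ _ ⟨0, hn⟩)
      simpa using le_abs_self R)
    rw [IbarNu_eq hs, integral_eq_zero_of_ae] at h1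
    · linarith
    · filter_upwards [hz] with x hx
      have : argF s h 0 0 0 x = 0 := by simp [argF, dotp]
      rw [this] at hx
      rw [(mul_eq_zero.1 hx).resolve_right hF'0.ne']
      simp
  · have hNp : 0 < tripNorm M β w := lt_of_le_of_ne (Real.sqrt_nonneg _) (Ne.symm hN)
    obtain ⟨R, hR⟩ := hcoer (IbarNu s h ν F M β w + 1)
    set t : ℝ := max 1 (R / tripNorm M β w)
    have ht1 : 1 ≤ t := le_max_left _ _
    have h1 := hR (t • M) (t * β) (t • w) (by rw [Matrix.IsSymm, Matrix.transpose_smul, hM.eq])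
      (by rw [Matrix.trace_smul, smul_eq_mul]; linear_combination t * htr) (by
        rw [tripNorm_smul _ _ _ (by linarith)]
        exact (div_le_iff₀ hNp).1 (le_max_right _ _))
    have : IbarNu s h ν F (t • M) (t * β) (t • w) = IbarNu s h ν F M β w := by
      rw [IbarNu_eq hs, IbarNu_eq hs]
      refine integral_congr_ae ?_
      filter_upwards [hz] with x hx
      have e := argF_add_smul s h 0 M 0 β 0 w x t
      have e0 : argF s h 0 0 0 x = 0 := by simp [argF, dotp]
      rw [e0] at e
      simp only [zero_add] at e
      rw [e]
      rcases mul_eq_zero.1 hx with h2 | h2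
      · rw [h2]; simp
      · have hneg : argF s h M β w x < 0 := by
          by_contra hcon
          have := hmd (not_lt.1 hcon)
          linarith
        have l1 : F (t * argF s h M β w x) ≤ F (argF s h M β w x) := hmono (by nlinarith)
        have l2 := tangent_le hc hd (argF s h M β w x)
          (t * argF s h M β w x - argF s h M β w x)
        rw [h2, zero_mul, add_zero, add_sub_cancel] at l2
        rw [le_antisymm l1 l2]
    linarith

/-! ### The Euler–Lagrange equation -/

theorem stmt0 {n : ℕ} (hn : 1 ≤ n) (s : ℝ) (hs : 0 < s)
    (h : (Fin n → ℝ) → ℝ) (hP : ProperLogConcave h) (hJ : JohnSPos s h)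
    (ν : MeasureTheory.Measure (Fin n → ℝ))
    (hfin : MeasureTheory.IsFiniteMeasure ν) (hν0 : ν ≠ 0)
    (hsupp : ν (contactSet s h)ᶜ = 0)
    (F : ℝ → ℝ) (hF : ClassW F) (hF1 : ContDiff ℝ 1 F)
    (hcoer : ∀ C : ℝ, ∃ R : ℝ, ∀ (M : Matrix (Fin n) (Fin n) ℝ) (β : ℝ) (w : Fin n → ℝ),
      M.IsSymm → s * β + Matrix.trace M = 0 → R ≤ tripNorm M β w →
      C ≤ IbarNu s h ν F M β w)
    (M₀ : Matrix (Fin n) (Fin n) ℝ) (β₀ : ℝ) (w₀ : Fin n → ℝ)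
    (hM₀ : M₀.IsSymm) (htr₀ : s * β₀ + Matrix.trace M₀ = 0)
    (hmin : ∀ (M : Matrix (Fin n) (Fin n) ℝ) (β : ℝ) (w : Fin n → ℝ),
      M.IsSymm → s * β + Matrix.trace M = 0 →
      IbarNu s h ν F M₀ β₀ w₀ ≤ IbarNu s h ν F M β w) :
    (∀ x, 0 ≤ minDens s h F M₀ β₀ w₀ x) ∧
    (0 < ∫ x in unitBall n, minDens s h F M₀ β₀ w₀ x ∂ν) ∧
    (∀ i, ∫ x in unitBall n, minDens s h F M₀ β₀ w₀ x * x i ∂ν = 0) ∧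
    (∃ lam : ℝ, 0 < lam ∧
      (∀ i j, ∫ x in unitBall n, minDens s h F M₀ β₀ w₀ x * (x i * x j) ∂ν
        = lam * (if i = j then 1 else 0)) ∧
      ∫ x in unitBall n, minDens s h F M₀ β₀ w₀ x * (1 - en2 x) ∂ν = lam * s) := by
  have hFc : ConvexOn ℝ Set.univ F := hF.2.2.1
  have hd : Differentiable ℝ F := hF1.differentiable (by norm_num)
  have hmd : Monotone (deriv F) :=
    monotoneOn_univ.1 (hFc.monotoneOn_deriv (fun x _ => hd x))
  have hF'0 : ∀ x, 0 ≤ deriv F x := fun x => hF.2.1.deriv_nonneg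
  have h0 := hP.1
  have hm : Measurable h := hP.2.1.measurable
  set ρ := ν.restrict (unitBall n) with hρ
  have hcont : ∀ᵐ x ∂ρ, x ∈ contactSet s h := ae_restrict_of_ae hsupp
  have hae : ∀ᵐ x ∂ρ, en2 x ≤ 1 ∧ (h x ^ (1 / s)) ^ 2 = 1 - en2 x := by
    filter_upwards [hcont] with x hx
    exact ⟨hx.1, by rw [hx.2, Real.sq_sqrt (by linarith [hx.1])]⟩
  have hp2 : ∀ x, h x ^ (2 / s) = (h x ^ (1 / s)) ^ 2 := by
    intro x
    rw [← Real.rpow_natCast, ← Real.rpow_mul (h0 x)]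
    congr 1
    push_cast
    ring
  set m := minDens s h F M₀ β₀ w₀ with hmdef
  set a := argF s h M₀ β₀ w₀ with ha
  have hmnn : ∀ x, 0 ≤ m x := by
    intro x
    simp only [hmdef, minDens]
    split_ifs
    · exact le_rfl
    · exact mul_nonneg (Real.rpow_nonneg (h0 x) _) (hF'0 _)
  -- passing from the density of `μ` to the weight `h^{1/s} F'(a)` costs a factor `h^{2/s}`
  have hconv : ∀ (M : Matrix (Fin n) (Fin n) ℝ) (β : ℝ) (w : Fin n → ℝ),
      (fun x => h x ^ (1 / s) * (deriv F (a x) * argF s h M β w x)) =ᵐ[ρ]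
        fun x => m x * (dotp x (M.mulVec x + w) + β * (1 - en2 x)) := by
    intro M β w
    filter_upwards [hae] with x ⟨hx1, hx2⟩
    by_cases hx0 : h x = 0
    · simp only [hmdef, minDens, if_pos hx0]
      rw [hx0, Real.zero_rpow (by positivity)]
      ring
    · have hpos : 0 < h x := lt_of_le_of_ne (h0 x) (Ne.symm hx0)
      have hpp : 0 < h x ^ (1 / s) := Real.rpow_pos_of_pos hpos _
      simp only [hmdef, minDens, if_neg hx0]
      change _ = h x ^ (-(1 / s)) * deriv F (a x) * _
      rw [← hx2, Real.rpow_neg (h0 x), argF, hp2]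
      field_simp
  have hfv : ∀ (M : Matrix (Fin n) (Fin n) ℝ) (β : ℝ) (w : Fin n → ℝ),
      M.IsSymm → s * β + Matrix.trace M = 0 →
      Integrable (fun x => h x ^ (1 / s) * (deriv F (a x) * argF s h M β w x)) ρ ∧
        ∫ x, h x ^ (1 / s) * (deriv F (a x) * argF s h M β w x) ∂ρ = 0 := by
    intro M β w hM htr
    have hsym : ∀ t : ℝ, (M₀ + t • M).IsSymm := by
      intro t
      rw [Matrix.IsSymm, Matrix.transpose_add, Matrix.transpose_smul, hM.eq, hM₀.eq]
    have htrt : ∀ t : ℝ, s * (β₀ + t * β) + Matrix.trace (M₀ + t • M) = 0 := by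
      intro t
      rw [Matrix.trace_add, Matrix.trace_smul, smul_eq_mul]
      linear_combination htr₀ + t * htr
    refine first_variation hFc hF1 (fun x => Real.rpow_nonneg (h0 x) _) (hm.pow_const _)
      (measurable_argF hm _ _ _) (measurable_argF hm _ _ _) (fun t => ?_) (fun t => ?_)
    · have := integrable_of_coercive hn hs h0 hm hF.1 hFc hF1.continuous.measurable hcoer
        (hsym t) (htrt t) (w := w₀ + t • w)
      simpa only [argF_add_smul] using this
    · have := hmin _ _ (w₀ + t • w) (hsym t) (htrt t)
      rw [IbarNu_eq hs, IbarNu_eq hs] at this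
      simpa only [argF_add_smul] using this
  have hstat : ∀ (M : Matrix (Fin n) (Fin n) ℝ) (β : ℝ) (w : Fin n → ℝ),
      M.IsSymm → s * β + Matrix.trace M = 0 →
      Integrable (fun x => m x * (dotp x (M.mulVec x + w) + β * (1 - en2 x))) ρ ∧
        ∫ x, m x * (dotp x (M.mulVec x + w) + β * (1 - en2 x)) ∂ρ = 0 := by
    intro M β w hM htr
    obtain ⟨h1, h2⟩ := hfv M β w hM htr
    exact ⟨h1.congr (hconv M β w), by rw [← integral_congr_ae (hconv M β w), h2]⟩
  have hwt : Integrable (fun x => h x ^ (1 / s) * deriv F (a x)) ρ :=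
    integrable_weight h0 hm hae hF'0 hmd
      (hfv 1 (-(n / s)) 0 Matrix.isSymm_one (by
        rw [Matrix.trace_one, Fintype.card_fin]; field_simp; ring)).1
  have hwm : (fun x => h x ^ (1 / s) * deriv F (a x)) =ᵐ[ρ] fun x => m x * (1 - en2 x) := by
    filter_upwards [hconv 0 1 0] with x hx
    have e1 : argF s h 0 1 0 x = 1 := by simp [argF, dotp]
    have e2 : dotp x ((0 : Matrix (Fin n) (Fin n) ℝ).mulVec x + 0) = 0 := by simp [dotp]
    rw [e1, e2] at hx
    simpa using hx
  have hIr : Integrable (fun x => m x * (1 - en2 x)) ρ := hwt.congr hwm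
  set L := ∫ x, m x * (1 - en2 x) ∂ρ with hL
  have hLpos : 0 < L := by
    rw [hL, ← integral_congr_ae hwm]
    have hnn : ∀ x, 0 ≤ h x ^ (1 / s) * deriv F (a x) :=
      fun x => mul_nonneg (Real.rpow_nonneg (h0 x) _) (hF'0 _)
    refine lt_of_le_of_ne (integral_nonneg hnn) fun hcon => ?_
    exact weight_ne_zero hn hs hF.2.1 hFc hd hF.2.2.2.2 hcoer hM₀ htr₀
      ((integral_eq_zero_iff_of_nonneg hnn hwt).1 hcon.symm)
  have hdiag : ∀ i, Integrable (fun x => m x * (x i * x i)) ρ ∧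
      ∫ x, m x * (x i * x i) ∂ρ = L / s := by
    intro i
    obtain ⟨h1, h2⟩ := hstat (Matrix.single i i 1) (-(1 / s)) 0
      (by simp [Matrix.IsSymm]) (by rw [Matrix.trace_single_eq_same]; field_simp; ring)
    have e : ∀ x : Fin n → ℝ, m x * (x i * x i) =
        m x * (dotp x ((Matrix.single i i (1 : ℝ)).mulVec x + 0) +
          -(1 / s) * (1 - en2 x)) + 1 / s * (m x * (1 - en2 x)) := by
      intro x
      rw [add_zero, dotp_single]
      ring
    simp only [e]
    refine ⟨h1.add (hIr.const_mul _), ?_⟩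
    rw [integral_add h1 (hIr.const_mul _), h2, integral_const_mul, zero_add, ← hL]
    ring
  refine ⟨hmnn, ?_, fun i => ?_, L / s, by positivity, fun i j => ?_, ?_⟩
  · have e : ∀ x, m x = (∑ i, m x * (x i * x i)) + m x * (1 - en2 x) := by
      intro x
      rw [← Finset.mul_sum, en2]
      simp only [sq]
      ring
    rw [integral_congr_ae (Eventually.of_forall e),
      integral_add (integrable_finsetSum _ fun i _ => (hdiag i).1) hIr,
      integral_finsetSum _ fun i _ => (hdiag i).1]
    refine add_pos_of_nonneg_of_pos (Finset.sum_nonneg fun i _ => ?_) hLpos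
    rw [(hdiag i).2]
    positivity
  · obtain ⟨_, h2⟩ := hstat 0 0 (Pi.single i 1) (by simp [Matrix.IsSymm]) (by simp)
    simpa only [dotp_single_vec, zero_mul, add_zero] using h2
  · by_cases hij : i = j
    · subst hij
      rw [if_pos rfl, mul_one]
      exact (hdiag i).2
    · obtain ⟨_, h2⟩ := hstat (Matrix.single i j 1 + Matrix.single j i 1) 0 0
        (by rw [Matrix.IsSymm, Matrix.transpose_add, Matrix.transpose_single,
              Matrix.transpose_single, add_comm])
        (by rw [Matrix.trace_add, Matrix.trace_single_eq_of_ne _ _ _ hij,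
              Matrix.trace_single_eq_of_ne _ _ _ (Ne.symm hij)]; ring)
      have e : ∀ x : Fin n → ℝ, m x * (dotp x ((Matrix.single i j (1 : ℝ) +
          Matrix.single j i 1).mulVec x + 0) + 0 * (1 - en2 x)) = 2 * (m x * (x i * x j)) := by
        intro x
        rw [add_zero, Matrix.add_mulVec, dotp_add, dotp_single, dotp_single]
        ring
      simp only [e] at h2
      rw [integral_const_mul] at h2
      rw [if_neg hij, mul_zero]
      linarith
  · field_simp
end
end

section
/- Let f,g : ℝ → [0,∞) satisfy properties (f1)–(f4) and (g1)–(g5), and define F : ℝ → ℝ by F(x) = ∫_ℝ f(t) g(t−x) dt (the convolution F = f ∗ ḡ with ḡ(x) = g(−x)). Then F is finite-valued, of class C¹, non-negative, non-decreasing, convex, strictly convex on [0,∞), and F′(0) > 0. -/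
/-!
After the substitution `t = x + u`, `F x = ∫ f (x + u) g u du`, with integrand continuous and
supported in `[-1 - x, 1]`. Monotonicity and convexity of `F` are therefore inherited from `f`,
pointwise in `u`. They become strict as soon as the (continuous, nonnegative) difference of
integrands is nonzero at one point: for strict convexity at `m = a x + b y`, at `u = -1 - m`
(`strictConvexOn_Fconv`), and for `F (-1) < F 0` at `u = 0` (`Fconv_neg_one_lt`). The latter, with
convexity, gives `F' 0 ≥ F 0 - F (-1) > 0`.

For the regularity, `g` is globally Lipschitz (`Prop_g.exists_lipschitzWith`), hence differentiable
almost everywhere with bounded derivative, and dominated differentiation of `∫ f t g (t - x) dt`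
puts the derivative on `g`: `F' x = -∫ f (x + u) g' u du` (`hasDerivAt_Fconv`). As `g'` is bounded
and supported in `[-1, 1]` and `f` is continuous, this is continuous in `x`.
-/

open MeasureTheory Real Set Filter Topology

noncomputable section

/-- A locally Lipschitz function that is constant on both sides of `[-1, 1]` is globally
Lipschitz: it factors through the projection onto `[-1, 1]`. -/
lemma Prop_g.exists_lipschitzWith {g : ℝ → ℝ} (hg : Prop_g g) :
    ∃ K : NNReal, LipschitzWith K g := by
  obtain ⟨-, hlip, -, hg1, -, hg0⟩ := hg
  obtain ⟨K, hK⟩ := (hlip.locallyLipschitzOn (s := Icc (-1 : ℝ) 1)).exists_lipschitzOnWith_of_compact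
    isCompact_Icc
  have h11 : (-1 : ℝ) ≤ 1 := by norm_num
  have hproj : ∀ x, g x = g (projIcc (-1 : ℝ) 1 h11 x) := by
    intro x
    rcases le_total x (-1) with h | h
    · rw [projIcc_of_le_left h11 h, hg1 x h, hg1 (-1) le_rfl]
    rcases le_total x 1 with h' | h'
    · rw [projIcc_of_mem h11 ⟨h, h'⟩]
    · rw [projIcc_of_right_le h11 h', hg0 x h', hg0 1 le_rfl]
  refine ⟨K, LipschitzWith.of_dist_le_mul fun x y => ?_⟩
  rw [hproj x, hproj y]
  refine (hK.dist_le_mul _ (projIcc _ _ h11 x).2 _ (projIcc _ _ h11 y).2).trans ?_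
  gcongr
  exact (LipschitzWith.projIcc h11).dist_le_mul x y |>.trans_eq (by simp)

lemma Prop_g.deriv_eq_zero {g : ℝ → ℝ} (hg : Prop_g g) {x : ℝ} (hx : x ∉ Icc (-1 : ℝ) 1) :
    deriv g x = 0 := by
  obtain ⟨-, -, -, hg1, -, hg0⟩ := hg
  rw [mem_Icc, not_and_or, not_le, not_le] at hx
  rcases hx with h | h
  · have : g =ᶠ[𝓝 x] fun _ => 1 := by
      filter_upwards [Iio_mem_nhds h] with y hy using hg1 y (le_of_lt hy)
    rw [this.deriv_eq]; simp
  · have : g =ᶠ[𝓝 x] fun _ => 0 := by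
      filter_upwards [Ioi_mem_nhds h] with y hy using hg0 y (le_of_lt hy)
    rw [this.deriv_eq]; simp

lemma Prop_f.monotone {f : ℝ → ℝ} (hf : Prop_f f) : Monotone f := by
  obtain ⟨h0, -, -, hz, hm⟩ := hf
  intro x y hxy
  rcases le_total x (-1) with h | h
  · rw [hz x h]; exact h0 y
  · exact hm.monotoneOn h (h.trans hxy) hxy

lemma Prop_f.pos {f : ℝ → ℝ} (hf : Prop_f f) {x : ℝ} (hx : -1 < x) : 0 < f x := by
  obtain ⟨h0, -, -, hz, hm⟩ := hf
  simpa [hz (-1) le_rfl] using hm (a := -1) (b := x) self_mem_Ici hx.le hx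

lemma continuous_shift_mul {f g : ℝ → ℝ} (hf : Prop_f f) (hg : Prop_g g)
    (x : ℝ) : Continuous fun u => f (x + u) * g u := by
  have := hf.2.1.continuous
  have := hg.2.1.continuous
  fun_prop

lemma shift_mul_eq_zero {f g : ℝ → ℝ} (hf : Prop_f f) (hg : Prop_g g)
    {x u : ℝ} (hu : u ∉ Icc (-1 - x) 1) : f (x + u) * g u = 0 := by
  rw [mem_Icc, not_and_or, not_le, not_le] at hu
  rcases hu with h | h
  · rw [hf.2.2.2.1 _ (by linarith), zero_mul]
  · rw [hg.2.2.2.2.2 _ h.le, mul_zero]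

lemma hasCompactSupport_shift_mul {f g : ℝ → ℝ} (hf : Prop_f f) (hg : Prop_g g)
    (x : ℝ) : HasCompactSupport fun u => f (x + u) * g u :=
  HasCompactSupport.intro (K := Icc (-1 - x) 1) isCompact_Icc fun _ hu =>
    shift_mul_eq_zero hf hg hu

lemma integrable_shift_mul {f g : ℝ → ℝ} (hf : Prop_f f) (hg : Prop_g g)
    (x : ℝ) : Integrable fun u => f (x + u) * g u :=
  (continuous_shift_mul hf hg x).integrable_of_hasCompactSupport
    (hasCompactSupport_shift_mul hf hg x)

lemma Fconv_eq (f g : ℝ → ℝ) (x : ℝ) : Fconv f g x = ∫ u, f (x + u) * g u := by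
  rw [Fconv, ← integral_add_left_eq_self (μ := volume) (fun t => f t * g (t - x)) x]
  simp

lemma integrable_conv {f g : ℝ → ℝ} (hf : Prop_f f) (hg : Prop_g g)
    (x : ℝ) : Integrable fun t => f t * g (t - x) := by
  simpa using (integrable_shift_mul hf hg x).comp_sub_right x

/-- The derivative falls on `g`, which is differentiable almost everywhere and globally
Lipschitz. -/
lemma hasDerivAt_Fconv {f g : ℝ → ℝ} (hf : Prop_f f) (hg : Prop_g g)
    (x : ℝ) :
    HasDerivAt (Fconv f g) (∫ u, f (x + u) * -deriv g u) x := by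
  obtain ⟨K, hK⟩ := hg.exists_lipschitzWith
  have hfc := hf.2.1.continuous
  have hbound : Integrable (fun t => (Icc (-1) (x + 2)).indicator (fun t => f t * K) t) :=
    ((hfc.mul continuous_const).continuousOn.integrableOn_compact isCompact_Icc).integrable_indicator
      measurableSet_Icc
  have hdiff : ∀ᵐ t : ℝ, DifferentiableAt ℝ g (t - x) :=
    (measurePreserving_sub_right volume x).quasiMeasurePreserving.ae hK.ae_differentiableAt_real
  have key := (hasDerivAt_integral_of_dominated_loc_of_lip (μ := volume) (𝕜 := ℝ)
    (F := fun x t => f t * g (t - x)) (F' := fun t => f t * -deriv g (t - x)) (x₀ := x)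
    (Metric.ball_mem_nhds x one_pos)
    (Eventually.of_forall fun y => (integrable_conv hf hg y).aestronglyMeasurable)
    (integrable_conv hf hg x)
    (hfc.measurable.mul
      ((measurable_deriv g).comp (measurable_id.sub_const x)).neg).aestronglyMeasurable
    (Eventually.of_forall fun t => ?_) hbound ?_).2
  · rw [← integral_add_left_eq_self (μ := volume) _ x] at key
    simp only [add_sub_cancel_left] at key
    exact key
  · refine LipschitzOnWith.of_dist_le_mul fun y hy z hz => ?_
    rw [Metric.mem_ball, Real.dist_eq, abs_lt] at hy hz
    by_cases ht : t ∈ Icc (-1) (x + 2)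
    · rw [indicator_of_mem ht, Real.coe_nnabs, abs_of_nonneg (mul_nonneg (hf.1 t) K.coe_nonneg),
        Real.dist_eq, ← mul_sub, abs_mul, abs_of_nonneg (hf.1 t), mul_assoc]
      refine mul_le_mul_of_nonneg_left ?_ (hf.1 t)
      have := hK.dist_le_mul (t - y) (t - z)
      rwa [dist_sub_left, Real.dist_eq] at this
    · rw [indicator_of_notMem ht]
      rw [mem_Icc, not_and_or, not_le, not_le] at ht
      rcases ht with h | h
      · simp [hf.2.2.2.1 t h.le]
      · simp [hg.2.2.2.2.2 (t - y) (by linarith), hg.2.2.2.2.2 (t - z) (by linarith)]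
  · filter_upwards [hdiff] with t ht
    have h1 : HasDerivAt (fun y => t - y) (-1) x := (hasDerivAt_id x).const_sub t
    have h2 := (ht.hasDerivAt.comp x h1).const_mul (f t)
    simpa using h2

lemma continuous_integral_deriv {f g : ℝ → ℝ} (hf : Prop_f f) (hg : Prop_g g) : Continuous fun x => ∫ u, f (x + u) * -deriv g u := by
  obtain ⟨K, hK⟩ := hg.exists_lipschitzWith
  have hfc := hf.2.1.continuous
  refine continuous_iff_continuousAt.2 fun x => ?_
  refine continuousAt_of_dominated
    (bound := (Icc (-1 : ℝ) 1).indicator (fun _ => f (x + 2) * K)) ?_ ?_ ?_ ?_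
  · exact Eventually.of_forall fun y => ((hfc.comp (continuous_const_add y)).measurable.mul
      (measurable_deriv g).neg).aestronglyMeasurable
  · filter_upwards [Iio_mem_nhds (show x < x + 1 by linarith)] with y hy
    refine Eventually.of_forall fun u => ?_
    by_cases hu : u ∈ Icc (-1 : ℝ) 1
    · rw [indicator_of_mem hu, norm_mul, norm_neg, Real.norm_of_nonneg (hf.1 _)]
      have := hu.2
      have hy' : y < x + 1 := hy
      exact mul_le_mul (hf.monotone (by linarith)) (norm_deriv_le_of_lipschitz hK)
        (norm_nonneg _) (hf.1 _)
    · rw [indicator_of_notMem hu, hg.deriv_eq_zero hu]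
      simp
  · exact (continuous_const.continuousOn.integrableOn_compact isCompact_Icc).integrable_indicator
      measurableSet_Icc
  · exact Eventually.of_forall fun u => by fun_prop

lemma monotone_Fconv {f g : ℝ → ℝ} (hf : Prop_f f) (hg : Prop_g g) : Monotone (Fconv f g) := by
  intro x y hxy
  rw [Fconv_eq, Fconv_eq]
  refine integral_mono (integrable_shift_mul hf hg x) (integrable_shift_mul hf hg y) fun u => ?_
  exact mul_le_mul_of_nonneg_right (hf.monotone (by linarith)) (hg.1 u)

lemma convexOn_Fconv {f g : ℝ → ℝ} (hf : Prop_f f) (hg : Prop_g g) : ConvexOn ℝ univ (Fconv f g) := by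
  refine ⟨convex_univ, fun x _ y _ a b ha hb hab => ?_⟩
  simp only [Fconv_eq, smul_eq_mul]
  rw [← integral_const_mul, ← integral_const_mul, ← integral_add
    ((integrable_shift_mul hf hg x).const_mul a) ((integrable_shift_mul hf hg y).const_mul b)]
  refine integral_mono (integrable_shift_mul hf hg _) (((integrable_shift_mul hf hg x).const_mul
    a).add ((integrable_shift_mul hf hg y).const_mul b)) fun u => ?_
  have h := hf.2.2.1.2 (mem_univ (x + u)) (mem_univ (y + u)) ha hb hab
  have e : a • (x + u) + b • (y + u) = a * x + b * y + u := by
    simp only [smul_eq_mul]; linear_combination u * hab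
  rw [e, smul_eq_mul, smul_eq_mul] at h
  have := mul_le_mul_of_nonneg_right h (hg.1 u)
  change f (a * x + b * y + u) * g u ≤ a * (f (x + u) * g u) + b * (f (y + u) * g u)
  linarith

/-- For `0 ≤ x < y` and `m = a x + b y`, the convexity inequality for `f` at `x + u`, `y + u` is strict for
`u = -1 - m`, since `f` vanishes at `m + u = -1` and is positive at `y + u`; and `g u = 1` there. -/
lemma strictConvexOn_Fconv {f g : ℝ → ℝ} (hf : Prop_f f) (hg : Prop_g g) : StrictConvexOn ℝ (Ici 0) (Fconv f g) := by
  refine LinearOrder.strictConvexOn_of_lt (convex_Ici 0) fun x hx y hy hxy a b ha hb hab => ?_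
  simp only [mem_Ici] at hx hy
  simp only [Fconv_eq, smul_eq_mul]
  have ix := (integrable_shift_mul hf hg x).const_mul a
  have iy := (integrable_shift_mul hf hg y).const_mul b
  have im := integrable_shift_mul hf hg (a * x + b * y)
  have ixy : Integrable fun u => a * (f (x + u) * g u) + b * (f (y + u) * g u) := ix.add iy
  have hpos : 0 < ∫ u, (a * (f (x + u) * g u) + b * (f (y + u) * g u)
      - f (a * x + b * y + u) * g u) := by
    refine integral_pos_of_integrable_nonneg_nonzero (x := -1 - (a * x + b * y)) ?_
      (ixy.sub im) ?_ ?_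
    · have hx := continuous_shift_mul hf hg x
      have hy := continuous_shift_mul hf hg y
      have hm := continuous_shift_mul hf hg (a * x + b * y)
      exact ((continuous_const.mul hx).add (continuous_const.mul hy)).sub hm
    · intro u
      have h := hf.2.2.1.2 (mem_univ (x + u)) (mem_univ (y + u)) ha.le hb.le hab
      have e : a • (x + u) + b • (y + u) = a * x + b * y + u := by
        simp only [smul_eq_mul]; linear_combination u * hab
      rw [e, smul_eq_mul, smul_eq_mul] at h
      have := mul_le_mul_of_nonneg_right h (hg.1 u)
      simp only [Pi.zero_apply]
      linarith
    · have hm0 : 0 ≤ a * x + b * y := by positivity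
      have hlt : a * x + b * y < y := by
        have : a * x < a * y := by gcongr
        have e : a * y + b * y = y := by rw [← add_mul, hab, one_mul]
        linarith
      have h1 : f (a * x + b * y + (-1 - (a * x + b * y))) = 0 := hf.2.2.2.1 _ (by linarith)
      have h2 : g (-1 - (a * x + b * y)) = 1 := hg.2.2.2.1 _ (by linarith)
      have h3 := hf.pos (x := y + (-1 - (a * x + b * y))) (by linarith)
      have h4 := hf.1 (x + (-1 - (a * x + b * y)))
      rw [h1, h2]
      apply ne_of_gt
      have := mul_pos hb h3
      have := mul_nonneg ha.le h4
      linarith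
  rw [integral_sub ixy im, integral_add ix iy, integral_const_mul,
    integral_const_mul] at hpos
  linarith

lemma Fconv_neg_one_lt {f g : ℝ → ℝ} (hf : Prop_f f) (hg : Prop_g g) : Fconv f g (-1) < Fconv f g 0 := by
  rw [Fconv_eq, Fconv_eq, ← sub_pos, ← integral_sub (integrable_shift_mul hf hg 0)
    (integrable_shift_mul hf hg (-1))]
  refine integral_pos_of_integrable_nonneg_nonzero (x := 0)
    ((continuous_shift_mul hf hg 0).sub (continuous_shift_mul hf hg (-1)))
    ((integrable_shift_mul hf hg 0).sub (integrable_shift_mul hf hg (-1))) (fun u => ?_) ?_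
  · rw [Pi.zero_apply, ← sub_mul]
    exact mul_nonneg (sub_nonneg.2 (hf.monotone (by linarith))) (hg.1 u)
  · have h1 := hf.pos (x := 0) (by norm_num)
    have h2 := hg.2.2.2.2.1 0 (by norm_num) (by norm_num)
    simp [hf.2.2.2.1 (-1) le_rfl, h1.ne', h2.ne']

theorem stmt7 (f g : ℝ → ℝ) (hf : Prop_f f) (hg : Prop_g g) :
    (∀ x : ℝ, MeasureTheory.Integrable (fun t => f t * g (t - x))) ∧
    ContDiff ℝ 1 (Fconv f g) ∧
    (∀ x, 0 ≤ Fconv f g x) ∧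
    Monotone (Fconv f g) ∧
    ConvexOn ℝ Set.univ (Fconv f g) ∧
    StrictConvexOn ℝ (Set.Ici (0 : ℝ)) (Fconv f g) ∧
    0 < deriv (Fconv f g) 0 := by
  have hderiv := hasDerivAt_Fconv hf hg
  refine ⟨integrable_conv hf hg, ?_, ?_, monotone_Fconv hf hg, convexOn_Fconv hf hg,
    strictConvexOn_Fconv hf hg, ?_⟩
  · refine contDiff_one_iff_deriv.2 ⟨fun x => (hderiv x).differentiableAt, ?_⟩
    rw [funext fun x => (hderiv x).deriv]
    exact continuous_integral_deriv hf hg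
  · exact fun x => integral_nonneg fun t => mul_nonneg (hf.1 t) (hg.1 _)
  · have h := (convexOn_Fconv hf hg).slope_le_deriv (mem_univ (-1)) (mem_univ 0) (by norm_num)
      (hderiv 0).differentiableAt
    refine lt_of_lt_of_le ?_ h
    rw [slope_def_field]
    have := Fconv_neg_one_lt hf hg
    apply div_pos <;> linarith
end
end

section
/- For every integer n ≥ 1 and real s > 0, the set ^{(s)}𝓔₊ = {(A, α, a) : A a symmetric positive-definite n×n real matrix, α > 0, a ∈ ℝ^n, α^s·det A ≥ 1} is a convex subset of the real vector space of triples (symmetric n×n matrices) × ℝ × ℝ^n: for any (A,α,a), (B,β,b) ∈ ^{(s)}𝓔₊ and λ ∈ [0,1], the triple (λA+(1−λ)B, λα+(1−λ)β, λa+(1−λ)b) belongs to ^{(s)}𝓔₊. -/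
/-!
Membership in the set is `1 ≤ α ^ s * det A`, and `(A, α) ↦ α ^ s * det A` is log-concave on
positive-definite `A` and positive `α`: its value at a convex combination is at least
`(α ^ s * det A) ^ l * (β ^ s * det B) ^ (1 - l)`, which is at least `1`.
The scalar factor is log-concave by weighted AM-GM, and the determinant is log-concave by
Minkowski's inequality `det_rpow_mul_det_rpow_le`. The latter is proved by simultaneous
diagonalisation: writing `A = Cᴴ * C` and `B = Cᴴ * D * C` with `C` invertible reduces it to
`A = 1` and a positive-definite `D`, where `det (l • 1 + (1 - l) • D)` is the product of
`l + (1 - l) * μ` over the eigenvalues `μ` of `D`, and each factor is at least `μ ^ (1 - l)`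
by AM-GM.
-/

open MeasureTheory Real Set Filter Topology

noncomputable section

lemma posDef_convexCombo {n : ℕ} {A B : Matrix (Fin n) (Fin n) ℝ} (hA : A.PosDef)
    (hB : B.PosDef) {l : ℝ} (hl : l ∈ Set.Icc (0 : ℝ) 1) :
    (l • A + (1 - l) • B).PosDef := by
  rcases hl.1.eq_or_lt with rfl | h0
  · simpa using hB
  · exact (hA.smul h0).add_posSemidef (hB.posSemidef.smul (sub_nonneg.2 hl.2))

/-- Minkowski's determinant inequality when one of the two matrices is the identity. -/
lemma det_rpow_le_det_one_combo {n : ℕ} {D : Matrix (Fin n) (Fin n) ℝ} (hD : D.PosDef)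
    {l : ℝ} (hl : l ∈ Set.Icc (0 : ℝ) 1) :
    D.det ^ (1 - l) ≤ (l • (1 : Matrix (Fin n) (Fin n) ℝ) + (1 - l) • D).det := by
  set U := hD.1.eigenvectorUnitary
  have hspec : D = (U : Matrix (Fin n) (Fin n) ℝ) * Matrix.diagonal hD.1.eigenvalues *
      star (U : Matrix (Fin n) (Fin n) ℝ) := by
    have h := hD.1.spectral_theorem
    rw [Unitary.conjStarAlgAut_apply] at h
    exact h
  have hUU : (U : Matrix (Fin n) (Fin n) ℝ) * star (U : Matrix (Fin n) (Fin n) ℝ) = 1 :=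
    Unitary.coe_mul_star_self U
  have hdiag : l • (1 : Matrix (Fin n) (Fin n) ℝ) + (1 - l) • D =
      (U : Matrix (Fin n) (Fin n) ℝ) *
        Matrix.diagonal (fun i => l + (1 - l) * hD.1.eigenvalues i) *
        star (U : Matrix (Fin n) (Fin n) ℝ) := by
    have hsum : Matrix.diagonal (fun i => l + (1 - l) * hD.1.eigenvalues i) =
        l • (1 : Matrix (Fin n) (Fin n) ℝ) + (1 - l) • Matrix.diagonal hD.1.eigenvalues := by
      rw [← Matrix.diagonal_one, ← Matrix.diagonal_smul, ← Matrix.diagonal_smul,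
        Matrix.diagonal_add]
      congr 1
      funext i
      simp
    rw [hsum, mul_add, add_mul, mul_smul_comm, smul_mul_assoc, mul_smul_comm, smul_mul_assoc,
      mul_one, hUU, ← hspec]
  have hdet : (l • (1 : Matrix (Fin n) (Fin n) ℝ) + (1 - l) • D).det =
      ∏ i, (l + (1 - l) * hD.1.eigenvalues i) := by
    rw [hdiag, Matrix.det_mul_right_comm, hUU, one_mul, Matrix.det_diagonal]
  have hdetD : D.det = ∏ i, hD.1.eigenvalues i := by
    simpa using hD.1.det_eq_prod_eigenvalues
  rw [hdet, hdetD, ← Real.finsetProd_rpow _ _ (fun i _ => (hD.eigenvalues_pos i).le)]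
  refine Finset.prod_le_prod (fun i _ => Real.rpow_nonneg (hD.eigenvalues_pos i).le _)
    fun i _ => ?_
  simpa using Real.geom_mean_le_arith_mean2_weighted hl.1 (sub_nonneg.2 hl.2) zero_le_one
    (hD.eigenvalues_pos i).le (by ring)

open scoped MatrixOrder in
/-- Minkowski's determinant inequality: the determinant is log-concave on positive-definite
matrices. -/
lemma det_rpow_mul_det_rpow_le {n : ℕ} {A B : Matrix (Fin n) (Fin n) ℝ} (hA : A.PosDef)
    (hB : B.PosDef) {l : ℝ} (hl : l ∈ Set.Icc (0 : ℝ) 1) :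
    A.det ^ l * B.det ^ (1 - l) ≤ (l • A + (1 - l) • B).det := by
  obtain ⟨C, hC⟩ := CStarAlgebra.nonneg_iff_eq_star_mul_self.mp hA.posSemidef.nonneg
  have hdetA : A.det = C.det * C.det := by
    rw [hC, Matrix.det_mul, Matrix.star_eq_conjTranspose, Matrix.det_conjTranspose, star_trivial]
  have hCdet : C.det ≠ 0 := by
    intro h
    have hpos := hA.det_pos
    simp [hdetA, h] at hpos
  have hCu : IsUnit C := (Matrix.isUnit_iff_isUnit_det C).2 hCdet.isUnit
  obtain ⟨D, hBD⟩ : ∃ D, B = star C * D * C := by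
    refine ⟨star C⁻¹ * B * C⁻¹, ?_⟩
    have h1 : C⁻¹ * C = 1 := Matrix.nonsing_inv_mul C hCdet.isUnit
    have h2 : star C * star C⁻¹ = 1 := by rw [← star_mul, h1, star_one]
    calc B = (star C * star C⁻¹) * B * (C⁻¹ * C) := by rw [h1, h2, one_mul, mul_one]
      _ = _ := by simp only [mul_assoc]
  have hD : D.PosDef := by
    rw [hBD] at hB
    exact (Matrix.IsUnit.posDef_star_left_conjugate_iff hCu).1 hB
  have hdetconj (M : Matrix (Fin n) (Fin n) ℝ) : (star C * M * C).det = A.det * M.det := by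
    rw [Matrix.det_mul, Matrix.det_mul, Matrix.star_eq_conjTranspose, Matrix.det_conjTranspose,
      star_trivial, hdetA]
    ring
  have hcombo : l • A + (1 - l) • B =
      star C * (l • (1 : Matrix (Fin n) (Fin n) ℝ) + (1 - l) • D) * C := by
    rw [mul_add, add_mul, mul_smul_comm, smul_mul_assoc, mul_smul_comm, smul_mul_assoc,
      mul_one, ← hC, ← hBD]
  rw [hcombo, hdetconj, hBD, hdetconj, Real.mul_rpow hA.det_pos.le hD.det_pos.le, ← mul_assoc,
    ← Real.rpow_add hA.det_pos, add_sub_cancel, Real.rpow_one]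
  exact mul_le_mul_of_nonneg_left (det_rpow_le_det_one_combo hD hl) hA.det_pos.le

theorem stmt19 {n : ℕ} (hn : 1 ≤ n) (s : ℝ) (hs : 0 < s)
    (A B : Matrix (Fin n) (Fin n) ℝ) (α β : ℝ) (a b : Fin n → ℝ)
    (hA : A.PosDef) (hB : B.PosDef) (hα : 0 < α) (hβ : 0 < β)
    (hdA : 1 ≤ α ^ s * A.det) (hdB : 1 ≤ β ^ s * B.det)
    (l : ℝ) (hl : l ∈ Set.Icc (0 : ℝ) 1) :
    (l • A + (1 - l) • B).PosDef ∧
    0 < l * α + (1 - l) * β ∧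
    1 ≤ (l * α + (1 - l) * β) ^ s * (l • A + (1 - l) • B).det := by
  have hl' : 0 ≤ 1 - l := sub_nonneg.2 hl.2
  have hgeom : 0 < α ^ l * β ^ (1 - l) := by positivity
  have hamgm : α ^ l * β ^ (1 - l) ≤ l * α + (1 - l) * β :=
    Real.geom_mean_le_arith_mean2_weighted hl.1 hl' hα.le hβ.le (by ring)
  refine ⟨posDef_convexCombo hA hB hl, hgeom.trans_le hamgm, ?_⟩
  have hA0 := hA.det_pos
  have hB0 := hB.det_pos
  calc (1 : ℝ) ≤ (α ^ s * A.det) ^ l * (β ^ s * B.det) ^ (1 - l) :=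
        one_le_mul_of_one_le_of_one_le (Real.one_le_rpow hdA hl.1) (Real.one_le_rpow hdB hl')
    _ = (α ^ l * β ^ (1 - l)) ^ s * (A.det ^ l * B.det ^ (1 - l)) := by
        rw [Real.mul_rpow (by positivity) hA0.le, Real.mul_rpow (by positivity) hB0.le,
          Real.mul_rpow (by positivity) (by positivity), ← Real.rpow_mul hα.le,
          ← Real.rpow_mul hβ.le, ← Real.rpow_mul hα.le, ← Real.rpow_mul hβ.le,
          mul_comm s l, mul_comm s (1 - l)]
        ring
    _ ≤ (l * α + (1 - l) * β) ^ s * (l • A + (1 - l) • B).det :=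
        mul_le_mul (Real.rpow_le_rpow hgeom.le hamgm hs.le) (det_rpow_mul_det_rpow_le hA hB hl)
          (by positivity) (Real.rpow_nonneg (hgeom.trans_le hamgm).le _)
end
end
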